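/- arXiv:1001.0287 — 3 statements merged into one kernel-verified Lean document; each statement's English description precedes it below -/
import Mathlib

section
/- Let H be a triangle-tree-structure with exactly t triangles, and let G be a connected graph obtained from H by attaching pendant edges, i.e., G consists of H together with some new vertices of degree one, each adjacent to exactly one vertex of H. Then rc(L(G)) ≤ t + 1. -/
open SimpleGraph

/-- An edge coloring `c` (colors on `Sym2 V`, only values on edges matter) makes `G`
rainbow connected if any two vertices are joined by a path no two of whose edges
get the same color. -/
def SimpleGraph.RainbowConnected {V α : Type*} (G : SimpleGraph V) (c : Sym2 V → α) : Prop :=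
  ∀ u v : V, ∃ p : G.Walk u v, p.IsPath ∧ (p.edges.map c).Nodup

/-- The rainbow connection number of `G`: the least `k` such that some edge coloring
with at most `k` colors makes `G` rainbow connected. -/
noncomputable def SimpleGraph.rc {V : Type*} (G : SimpleGraph V) : ℕ :=
  sInf {k | ∃ c : Sym2 V → ℕ, (∀ e ∈ G.edgeSet, c e < k) ∧ G.RainbowConnected c}

/-- A triangle of `G`: three mutually adjacent vertices. -/
def SimpleGraph.IsTriangle {V : Type*} (G : SimpleGraph V) (T : Finset V) : Prop :=
  T.card = 3 ∧ ∀ u ∈ T, ∀ v ∈ T, u ≠ v → G.Adj u v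

/-- The set of edges of a triangle (or clique) with vertex set `T`. -/
def triangleEdges {V : Type*} (T : Finset V) : Set (Sym2 V) :=
  {e | ∃ u ∈ T, ∃ v ∈ T, u ≠ v ∧ e = s(u, v)}

/-- The number of inner vertices (vertices of degree at least two) of `G`. -/
noncomputable def innerCount {V : Type*} (G : SimpleGraph V) : ℕ :=
  {v : V | 2 ≤ Nat.card (G.neighborSet v)}.ncard

/-- A graph is a triangle-forest-structure (i.e. every block is a triangle, so every
connected component is a triangle-tree-structure) if and only if every edge lies in a
triangle and every cycle has length 3. -/
def SimpleGraph.IsTriangleForest {V : Type*} (H : SimpleGraph V) : Prop :=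
  (∀ e ∈ H.edgeSet, ∃ T : Finset V, H.IsTriangle T ∧ e ∈ triangleEdges T) ∧
  ∀ (v : V) (p : H.Walk v v), p.IsCycle → p.length = 3


namespace TriTree

variable {W : Type*}

theorem twoPath {H : SimpleGraph W} (hc : H.Connected) (r u w : W) (hne : u ≠ w)
    (hd : H.dist r u = H.dist r w) :
    ∃ q : H.Walk u w, q.IsPath ∧ 2 ≤ q.length ∧
      ∀ x ∈ q.support, x = u ∨ x = w ∨ H.dist r x < H.dist r u := by
  classical
  have key : ∀ v, ∃ p : H.Walk r v, ∀ x ∈ p.support, x = v ∨ H.dist r x < H.dist r v := by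
    intro v
    obtain ⟨p, hp⟩ := hc.exists_walk_length_eq_dist r v
    refine ⟨p, fun x hx => ?_⟩
    by_cases hxv : x = v
    · exact Or.inl hxv
    · right
      have h1 := p.length_takeUntil_lt_length hx hxv
      have h2 := SimpleGraph.dist_le (p.takeUntil x hx)
      omega
  obtain ⟨pu, hpu⟩ := key u
  obtain ⟨pw, hpw⟩ := key w
  let q := (pu.reverse.append pw).bypass
  have hq : q.IsPath := SimpleGraph.Walk.bypass_isPath _
  refine ⟨q, hq, ?_, ?_⟩
  · by_contra hlt
    have hlen : q.length = 0 ∨ q.length = 1 := by omega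
    rcases hlen with h0 | h1
    · exact hne (SimpleGraph.Walk.eq_of_length_eq_zero h0)
    · have hmem : s(u, w) ∈ q.edges := by
        revert h1
        generalize q = q'
        intro h1
        match q', h1 with
        | .cons h .nil, _ => simp
      have h2 := SimpleGraph.Walk.edges_bypass_subset_edges _ hmem
      rw [SimpleGraph.Walk.edges_append, List.mem_append, SimpleGraph.Walk.edges_reverse,
        List.mem_reverse] at h2
      rcases h2 with h2 | h2
      · rcases hpu w (SimpleGraph.Walk.snd_mem_support_of_mem_edges _ h2) with h | h
        · exact hne h.symm
        · omega
      · rcases hpw u (SimpleGraph.Walk.fst_mem_support_of_mem_edges _ h2) with h | h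
        · exact hne h
        · omega
  · intro x hx
    have h2 := SimpleGraph.Walk.support_bypass_subset_support _ hx
    rw [SimpleGraph.Walk.mem_support_append_iff, SimpleGraph.Walk.support_reverse,
      List.mem_reverse] at h2
    rcases h2 with h2 | h2
    · rcases hpu x h2 with h | h <;> simp [h]
    · rcases hpw x h2 with h | h
      · simp [h]
      · right; right; omega

theorem par_unique {H : SimpleGraph W} (hc : H.Connected)
    (hcyc : ∀ (v : W) (p : H.Walk v v), p.IsCycle → p.length = 3)
    (r u w v : W) (hu : H.Adj v u) (hw : H.Adj v w)
    (hd : H.dist r u = H.dist r w) (hlt : H.dist r u < H.dist r v) : u = w := by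
  by_contra hne
  obtain ⟨q, hq, hlen, hs⟩ := twoPath hc r u w hne hd
  have hv : v ∉ q.support := by
    intro hv
    rcases hs v hv with h | h | h
    · subst h; exact hu.ne rfl
    · subst h; exact hw.ne rfl
    · omega
  have hcy : (SimpleGraph.Walk.cons hu (q.concat hw.symm)).IsCycle := by
    rw [SimpleGraph.Walk.cons_isCycle_iff]
    refine ⟨hq.concat hv _, ?_⟩
    rw [SimpleGraph.Walk.edges_concat]
    simp only [List.concat_eq_append, List.mem_append, List.mem_singleton, not_or]
    refine ⟨fun h => hv (SimpleGraph.Walk.fst_mem_support_of_mem_edges _ h), ?_⟩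
    intro h
    have := hw.ne
    rcases Sym2.eq_iff.1 h with h | h
    · exact this h.1
    · exact hne h.2
  have := hcyc v _ hcy
  simp at this
  omega

theorem sib_par {H : SimpleGraph W} (hc : H.Connected)
    (hcyc : ∀ (v : W) (p : H.Walk v v), p.IsCycle → p.length = 3)
    (r u w : W) (hu : H.Adj u w)
    (hd : H.dist r u = H.dist r w) :
    ∃ x, H.Adj u x ∧ H.Adj w x ∧ H.dist r x < H.dist r u := by
  obtain ⟨q, hq, hlen, hs⟩ := twoPath hc r u w hu.ne hd
  have hcy : (SimpleGraph.Walk.cons hu.symm q).IsCycle := by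
    rw [SimpleGraph.Walk.cons_isCycle_iff]
    refine ⟨hq, ?_⟩
    intro h
    match q, hq, hlen, h with
    | .cons (v := z) h1 q', hq, hlen, h =>
      rw [SimpleGraph.Walk.cons_isPath_iff] at hq
      simp only [SimpleGraph.Walk.edges_cons, List.mem_cons] at h
      rcases h with h | h
      · have : w = z := by
          rcases Sym2.eq_iff.1 h with h | h
          · exact absurd h.1 hu.ne.symm
          · exact h.1
        subst this
        have := SimpleGraph.Walk.length_eq_zero_iff.2 (SimpleGraph.Walk.isPath_iff_nil.1 hq.1)
        simp at hlen
        omega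
      · exact hq.2 (SimpleGraph.Walk.snd_mem_support_of_mem_edges _ h)
  have h3 := hcyc w _ hcy
  match q, hq, hlen, hs, h3 with
  | .cons (v := z) h1 (.cons h2 .nil), hq, hlen, hs, _ =>
    refine ⟨z, h1, h2.symm, ?_⟩
    rcases hs z (by simp) with h | h | h
    · subst h; exact absurd rfl h1.ne
    · subst h; exact absurd rfl h2.ne
    · exact h

theorem sib_unique {H : SimpleGraph W} 
    (hcyc : ∀ (v : W) (p : H.Walk v v), p.IsCycle → p.length = 3)
    (v w w' p : W) (h1 : H.Adj v w) (h2 : H.Adj w p) (h3 : H.Adj p w') (h4 : H.Adj w' v)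
    (hp : v ≠ p) : w = w' := by
  by_contra hne
  have hcy : (SimpleGraph.Walk.cons h1 (.cons h2 (.cons h3 (.cons h4 .nil)))).IsCycle := by
    rw [SimpleGraph.Walk.cons_isCycle_iff]
    have := h1.ne
    have := h2.ne
    have := h3.ne
    have := h4.ne
    simp only [SimpleGraph.Walk.cons_isPath_iff]
    simp
    grind
  have := hcyc v _ hcy
  simp at this

/-- The rooted structure of a triangle tree. -/
structure Rooted (H : SimpleGraph W) (r : W) (par sib : W → W) : Prop where
  par_root : par r = r
  par_adj : ∀ v, v ≠ r → H.Adj v (par v)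
  par_dist : ∀ v, v ≠ r → H.dist r v = H.dist r (par v) + 1
  sib_adj : ∀ v, v ≠ r → H.Adj v (sib v)
  sib_dist : ∀ v, v ≠ r → H.dist r (sib v) = H.dist r v
  sib_sib : ∀ v, v ≠ r → sib (sib v) = v
  sib_root : ∀ v, v ≠ r → sib v ≠ r
  par_sib : ∀ v, v ≠ r → par (sib v) = par v

theorem exists_rooted {H : SimpleGraph W} (hc : H.Connected) (hf : H.IsTriangleForest) (r : W) :
    ∃ par sib : W → W, Rooted H r par sib := by
  classical
  obtain ⟨htri, hcyc⟩ := hf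
  have adj_dist : ∀ u v, H.Adj u v → H.dist r u ≤ H.dist r v + 1 := by
    intro u v h
    have h1 := hc.dist_triangle (u := r) (v := v) (w := u)
    rw [SimpleGraph.dist_eq_one_iff_adj.2 h.symm] at h1
    exact h1
  have hpar : ∀ v, ∃ p, if v = r then p = r else H.Adj v p ∧ H.dist r v = H.dist r p + 1 := by
    intro v
    by_cases hv : v = r
    · exact ⟨r, by simp [hv]⟩
    · obtain ⟨p, hp⟩ := hc.exists_walk_length_eq_dist v r
      rw [SimpleGraph.dist_comm] at hp
      match p, hp with
      | .nil, hp => exact absurd rfl hv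
      | .cons (v := z) h q, hp =>
        refine ⟨z, ?_⟩
        rw [if_neg hv]
        refine ⟨h, ?_⟩
        have h1 := SimpleGraph.dist_le q
        rw [SimpleGraph.dist_comm] at h1
        have h2 := adj_dist _ _ h
        simp at hp
        omega
  choose par hpar using hpar
  have hpr : par r = r := by simpa using hpar r
  have hpv : ∀ v, v ≠ r → H.Adj v (par v) ∧ H.dist r v = H.dist r (par v) + 1 := by
    intro v hv
    simpa [hv] using hpar v
  have hpu : ∀ v u, v ≠ r → H.Adj v u → H.dist r u < H.dist r v → u = par v := by
    intro v u hv h1 h2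
    have h3 := hpv v hv
    have h4 := adj_dist _ _ h1
    exact par_unique hc hcyc r _ _ v h1 h3.1 (by omega) h2
  have hsib : ∀ v, ∃ s, v ≠ r → H.Adj v s ∧ H.dist r s = H.dist r v := by
    intro v
    by_cases hv : v = r
    · exact ⟨r, fun h => absurd hv h⟩
    · obtain ⟨h1, h2⟩ := hpv v hv
      obtain ⟨T, ⟨hT3, hTadj⟩, a, ha, b, hb, hab, he⟩ := htri s(v, par v) h1
      have hvT : v ∈ T ∧ par v ∈ T := by
        rcases Sym2.eq_iff.1 he with ⟨h, h'⟩ | ⟨h, h'⟩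
        · exact ⟨h ▸ ha, h' ▸ hb⟩
        · exact ⟨h ▸ hb, h' ▸ ha⟩
      have : ∃ s ∈ T, s ≠ v ∧ s ≠ par v := by
        by_contra hcon
        push Not at hcon
        have hsub : T ⊆ {v, par v} := by
          intro x hx
          have := hcon x hx
          simp
          tauto
        have := Finset.card_le_card hsub
        have := Finset.card_le_two (a := v) (b := par v)
        omega
      obtain ⟨s, hs, hsv, hsp⟩ := this
      refine ⟨s, fun _ => ?_⟩
      have h3 := hTadj v hvT.1 s hs hsv.symm
      have h4 := hTadj s hs _ hvT.2 hsp
      refine ⟨h3, ?_⟩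
      have h5 := adj_dist _ _ h4
      by_contra h6
      exact hsp (hpu v s hv h3 (by omega))
  choose sib hsib using hsib
  have hroot : ∀ v, v ≠ r → H.dist r v ≠ 0 := by
    intro v hv
    have := (hpv v hv).2
    omega
  have hsr : ∀ v, v ≠ r → sib v ≠ r := by
    intro v hv h
    have h1 := (hsib v hv).2
    rw [h, SimpleGraph.dist_self] at h1
    exact hroot v hv h1.symm
  have same_par : ∀ v w, v ≠ r → w ≠ r → H.Adj v w → H.dist r v = H.dist r w → par v = par w := by
    intro v w hv hw h1 h2
    obtain ⟨x, hx1, hx2, hx3⟩ := sib_par hc hcyc r v w h1 h2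
    rw [← hpu v x hv hx1 hx3, ← hpu w x hw hx2 (by omega)]
  refine ⟨par, sib, hpr, fun v hv => (hpv v hv).1, fun v hv => (hpv v hv).2,
    fun v hv => (hsib v hv).1, fun v hv => (hsib v hv).2, ?_, hsr, ?_⟩
  · intro v hv
    have hs := hsr v hv
    have hss := hsr _ hs
    have a1 := hsib v hv
    have a2 := hsib _ hs
    have p1 := same_par v _ hv hs a1.1 a1.2.symm
    have p2 := same_par _ _ hs hss a2.1 a2.2.symm
    have b1 := hpv v hv
    have b3 := hpv _ hss
    have b2 := hpv _ hs
    refine (sib_unique hcyc (sib v) v (sib (sib v)) (par v) a1.1.symm b1.1 ?_ a2.1.symm ?_).symm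
    · rw [p1, p2]; exact b3.1.symm
    · intro h
      rw [← p1, ← h] at b2
      exact b2.1.ne rfl
  · intro v hv
    have a1 := hsib v hv
    exact (same_par v _ hv (hsr v hv) a1.1 a1.2.symm).symm

/-- `e` and `f` are joined by a walk with pairwise distinct colors, all in `S`. -/
def Reach {E : Type*} (L : SimpleGraph E) (c : Sym2 E → ℕ) (e f : E) (S : Set ℕ) : Prop :=
  ∃ p : L.Walk e f, (p.edges.map c).Nodup ∧ ∀ k ∈ p.edges.map c, k ∈ S

theorem Reach.refl {E : Type*} (L : SimpleGraph E) (c : Sym2 E → ℕ) (e : E) (S : Set ℕ) :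
    Reach L c e e S := ⟨.nil, by simp, by simp⟩

theorem Reach.mono {E : Type*} {L : SimpleGraph E} {c : Sym2 E → ℕ} {e f : E} {S S' : Set ℕ}
    (h : Reach L c e f S) (hS : S ⊆ S') : Reach L c e f S' := by
  obtain ⟨p, h1, h2⟩ := h
  exact ⟨p, h1, fun k hk => hS (h2 k hk)⟩

theorem Reach.symm {E : Type*} {L : SimpleGraph E} {c : Sym2 E → ℕ} {e f : E} {S : Set ℕ}
    (h : Reach L c e f S) : Reach L c f e S := by
  obtain ⟨p, h1, h2⟩ := h
  refine ⟨p.reverse, ?_, ?_⟩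
  · rw [SimpleGraph.Walk.edges_reverse, List.map_reverse, List.nodup_reverse]
    exact h1
  · intro k hk
    rw [SimpleGraph.Walk.edges_reverse, List.map_reverse, List.mem_reverse] at hk
    exact h2 k hk

theorem Reach.cons {E : Type*} {L : SimpleGraph E} {c : Sym2 E → ℕ} {d e f : E} {S : Set ℕ}
    (h : Reach L c e f S) (hde : L.Adj d e) (hc : c s(d, e) ∉ S) :
    Reach L c d f (insert (c s(d, e)) S) := by
  obtain ⟨p, h1, h2⟩ := h
  refine ⟨.cons hde p, ?_, ?_⟩
  · simp only [SimpleGraph.Walk.edges_cons, List.map_cons, List.nodup_cons]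
    exact ⟨fun h => hc (h2 _ h), h1⟩
  · intro k hk
    simp only [SimpleGraph.Walk.edges_cons, List.map_cons, List.mem_cons] at hk
    rcases hk with rfl | hk
    · exact Set.mem_insert _ _
    · exact Set.mem_insert_of_mem _ (h2 k hk)

theorem Reach.single {E : Type*} {L : SimpleGraph E} {c : Sym2 E → ℕ} {e f : E} {S : Set ℕ}
    (hef : L.Adj e f) (hc : c s(e, f) ∈ S) : Reach L c e f S := by
  refine ((Reach.refl L c f ∅).cons hef (by simp)).mono ?_
  intro k hk
  simp at hk
  rw [hk]; exact hc

theorem Reach.path {E : Type*} {L : SimpleGraph E} {c : Sym2 E → ℕ} {e f : E} {S : Set ℕ}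
    (h : Reach L c e f S) : ∃ p : L.Walk e f, p.IsPath ∧ (p.edges.map c).Nodup := by
  classical
  obtain ⟨p, h1, h2⟩ := h
  have hp := p.bypass_isPath
  refine ⟨p.bypass, hp, ?_⟩
  refine List.Nodup.map_on ?_ hp.isTrail.edges_nodup
  intro a ha b hb hab
  exact List.inj_on_of_nodup_map h1 (p.edges_bypass_subset_edges ha)
    (p.edges_bypass_subset_edges hb) hab

variable {V : Type*} {P : Set V}

/-- `e` is neither the parent edge nor the sibling edge at `x`. -/
def Down (par sib : ↥Pᶜ → ↥Pᶜ) (x : ↥Pᶜ) (e : Sym2 V) : Prop :=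
  e ≠ s((x : V), (par x : V)) ∧ e ≠ s((x : V), (sib x : V))

/-- The pairs of edges at `x` that receive the color `0`. -/
def Zero (r : ↥Pᶜ) (par sib : ↥Pᶜ → ↥Pᶜ) (lft : ↥Pᶜ → Prop) (x : ↥Pᶜ) (e f : Sym2 V) : Prop :=
  x = r ∨ (Down par sib x e ∧ Down par sib x f) ∨
    (lft x ∧ ((e = s((x : V), (sib x : V)) ∧ Down par sib x f) ∨
      (f = s((x : V), (sib x : V)) ∧ Down par sib x e)))

open Classical in
/-- The color of the edge of the line graph joining `e` and `f` at `x`. -/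
noncomputable def col (r : ↥Pᶜ) (par sib : ↥Pᶜ → ↥Pᶜ) (lft : ↥Pᶜ → Prop) (κ : ↥Pᶜ → ℕ)
    (x : ↥Pᶜ) (e f : Sym2 V) : ℕ :=
  if Zero r par sib lft x e f then 0 else κ x

theorem col_symm (r : ↥Pᶜ) (par sib : ↥Pᶜ → ↥Pᶜ) (lft : ↥Pᶜ → Prop) (κ : ↥Pᶜ → ℕ)
    (x : ↥Pᶜ) (e f : Sym2 V) : col r par sib lft κ x e f = col r par sib lft κ x f e := by
  have : Zero r par sib lft x e f ↔ Zero r par sib lft x f e := by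
    unfold Zero; tauto
  unfold col
  by_cases h : Zero r par sib lft x e f
  · rw [if_pos h, if_pos (this.1 h)]
  · rw [if_neg h, if_neg (fun h' => h (this.2 h'))]

open Classical in
/-- The coloring of the edges of the line graph. -/
noncomputable def coloring (G : SimpleGraph V) (r : ↥Pᶜ) (par sib : ↥Pᶜ → ↥Pᶜ)
    (lft : ↥Pᶜ → Prop) (κ : ↥Pᶜ → ℕ) (z : Sym2 G.edgeSet) : ℕ :=
  if h : ∃ q : ↥Pᶜ × G.edgeSet × G.edgeSet, z = s(q.2.1, q.2.2) ∧ q.2.1 ≠ q.2.2 ∧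
      (q.1 : V) ∈ (q.2.1 : Sym2 V) ∧ (q.1 : V) ∈ (q.2.2 : Sym2 V) then
    col r par sib lft κ h.choose.1 h.choose.2.1 h.choose.2.2
  else 0

theorem coloring_eq (G : SimpleGraph V) (r : ↥Pᶜ) (par sib : ↥Pᶜ → ↥Pᶜ)
    (lft : ↥Pᶜ → Prop) (κ : ↥Pᶜ → ℕ) (e f : G.edgeSet) (x : ↥Pᶜ) (hne : e ≠ f)
    (he : (x : V) ∈ (e : Sym2 V)) (hf : (x : V) ∈ (f : Sym2 V)) :
    coloring G r par sib lft κ s(e, f) = col r par sib lft κ x e f := by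
  have h : ∃ q : ↥Pᶜ × G.edgeSet × G.edgeSet, s(e, f) = s(q.2.1, q.2.2) ∧ q.2.1 ≠ q.2.2 ∧
      (q.1 : V) ∈ (q.2.1 : Sym2 V) ∧ (q.1 : V) ∈ (q.2.2 : Sym2 V) :=
    ⟨(x, e, f), rfl, hne, he, hf⟩
  unfold coloring
  rw [dif_pos h]
  have hs := h.choose_spec
  generalize h.choose = q at hs
  obtain ⟨h1, h2, h3, h4⟩ := hs
  have hne' : (e : Sym2 V) ≠ f := fun hh => hne (Subtype.ext hh)
  have hx : ∀ y : ↥Pᶜ, (y : V) ∈ (e : Sym2 V) → (y : V) ∈ (f : Sym2 V) → y = x := by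
    intro y hy1 hy2
    by_contra hyx
    have hyx' : (y : V) ≠ x := fun hh => hyx (Subtype.ext hh)
    exact hne' (((Sym2.mem_and_mem_iff hyx').1 ⟨hy1, he⟩).trans
      ((Sym2.mem_and_mem_iff hyx').1 ⟨hy2, hf⟩).symm)
  rcases Sym2.eq_iff.1 h1 with ⟨a, b⟩ | ⟨a, b⟩
  · rw [← a] at h3 ⊢
    rw [← b] at h4 ⊢
    rw [hx _ h3 h4]
  · rw [← b] at h3 ⊢
    rw [← a] at h4 ⊢
    rw [hx _ h4 h3, col_symm]

theorem main {G : SimpleGraph V} {H : SimpleGraph ↥Pᶜ} (hHG : ∀ x y : ↥Pᶜ, H.Adj x y → G.Adj x y)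
    (r : ↥Pᶜ) (par sib : ↥Pᶜ → ↥Pᶜ) (hR : Rooted H r par sib) (lft : ↥Pᶜ → Prop) (κ : ↥Pᶜ → ℕ)
    (hκ0 : ∀ x, x ≠ r → κ x ≠ 0)
    (hκ : ∀ x y, x ≠ r → y ≠ r → κ x = κ y → y = x ∨ y = sib x)
    (hκs : ∀ x, x ≠ r → κ (sib x) = κ x)
    (hlft : ∀ x, x ≠ r → (lft x ↔ ¬ lft (sib x)))
    (n : ℕ) : ∀ (x y : ↥Pᶜ) (e f : G.edgeSet), H.dist r x ≤ n → H.dist r y ≤ n →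
      (x : V) ∈ (e : Sym2 V) → (e : Sym2 V) ≠ s((x : V), (par x : V)) →
      (y : V) ∈ (f : Sym2 V) → (f : Sym2 V) ≠ s((y : V), (par y : V)) →
      Reach G.lineGraph (coloring G r par sib lft κ) e f
        {k | k = 0 ∨ ∃ w, w ≠ r ∧ H.dist r w ≤ n ∧ κ w = k} := by
  have hval : ∀ x e f, col r par sib lft κ x e f = 0 ∨ (x ≠ r ∧ col r par sib lft κ x e f = κ x) := by
    intro x e f
    unfold col
    split_ifs with h
    · exact Or.inl rfl
    · right
      refine ⟨fun hh => h (Or.inl hh), rfl⟩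
  have join : ∀ (m : ℕ) (x : ↥Pᶜ) (e f : G.edgeSet), H.dist r x ≤ m →
      (x : V) ∈ (e : Sym2 V) → (x : V) ∈ (f : Sym2 V) →
      Reach G.lineGraph (coloring G r par sib lft κ) e f
        {k | k = 0 ∨ ∃ w, w ≠ r ∧ H.dist r w ≤ m ∧ κ w = k} := by
    intro m x e f hx he hf
    by_cases hef : e = f
    · subst hef; exact Reach.refl _ _ _ _
    · refine Reach.single (SimpleGraph.lineGraph_adj_iff_exists.2 ⟨hef, x, he, hf⟩) ?_
      rw [coloring_eq G r par sib lft κ e f x hef he hf]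
      rcases hval x e f with h | ⟨h0, h⟩
      · exact Or.inl h
      · exact Or.inr ⟨x, h0, hx, h.symm⟩
  have up : ∀ (x : ↥Pᶜ) (e : G.edgeSet), x ≠ r → (x : V) ∈ (e : Sym2 V) →
      (e : Sym2 V) ≠ s((x : V), (par x : V)) →
      ∃ e' : G.edgeSet, G.lineGraph.Adj e e' ∧ coloring G r par sib lft κ s(e, e') = κ x ∧
        (par x : V) ∈ (e' : Sym2 V) ∧ (e' : Sym2 V) ≠ s((par x : V), (par (par x) : V)) := by
    intro x e hx he hne
    have hadj := hR.par_adj x hx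
    have hd := hR.par_dist x hx
    let e' : G.edgeSet := ⟨s((x : V), (par x : V)), hHG _ _ hadj⟩
    have hee : e ≠ e' := fun hh => hne (congrArg Subtype.val hh)
    refine ⟨e', SimpleGraph.lineGraph_adj_iff_exists.2 ⟨hee, x, he, by simp [e']⟩, ?_,
      by simp [e'], ?_⟩
    · rw [coloring_eq G r par sib lft κ e e' x hee he (by simp [e'])]
      unfold col
      rw [if_neg]
      unfold Zero
      have h1 : ¬ Down par sib x e' := fun h => h.1 rfl
      have h2 : (e' : Sym2 V) ≠ s((x : V), (sib x : V)) := by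
        intro h
        have h3 : par x = sib x := Subtype.ext (Sym2.congr_right.1 h)
        have := hR.sib_dist x hx
        rw [← h3] at this
        omega
      tauto
    · intro h
      by_cases hp : par x = r
      · rw [hp, hR.par_root] at h
        have := Sym2.eq_iff.1 h
        apply hx
        apply Subtype.ext
        rw [hp] at this
        tauto
      · have hd2 := hR.par_dist _ hp
        rcases Sym2.eq_iff.1 h with ⟨h1, h2⟩ | ⟨h1, h2⟩
        · have h1 := Subtype.ext h1
          exact hadj.ne h1
        · have h1 := Subtype.ext h1
          rw [← h1] at hd2
          omega
  have hroot : ∀ x, x = r → H.dist r x = 0 := by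
    intro x hx; rw [hx, SimpleGraph.dist_self]
  have hnew : ∀ m x, x ≠ r → H.dist r x = m + 1 →
      κ x ∉ {k | k = 0 ∨ ∃ w, w ≠ r ∧ H.dist r w ≤ m ∧ κ w = k} := by
    rintro m x hx hd (h | ⟨w, hw, hwd, h⟩)
    · exact hκ0 x hx h
    · rcases hκ w x hw hx h with h | h
      · rw [h] at hd; omega
      · have := hR.sib_dist w hw
        rw [h] at hd; omega
  induction n with
  | zero =>
    intro x y e f hx hy he _ hf _
    have hz : ∀ x, H.dist r x ≤ 0 → x = r := by
      intro x hx
      by_contra h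
      have := hR.par_dist x h
      omega
    have h1 := hz x hx
    have h2 := hz y hy
    subst h1
    subst h2
    exact join 0 _ e f hx he hf
  | succ n ih =>
    have hmono : {k | k = 0 ∨ ∃ w, w ≠ r ∧ H.dist r w ≤ n ∧ κ w = k} ⊆
        {k | k = 0 ∨ ∃ w, w ≠ r ∧ H.dist r w ≤ n + 1 ∧ κ w = k} := by
      rintro k (h | ⟨w, a, b, h⟩)
      · exact Or.inl h
      · exact Or.inr ⟨w, a, by omega, h⟩
    have one : ∀ (x y : ↥Pᶜ) (e f : G.edgeSet), H.dist r x = n + 1 → H.dist r y ≤ n →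
      (x : V) ∈ (e : Sym2 V) → (e : Sym2 V) ≠ s((x : V), (par x : V)) →
      (y : V) ∈ (f : Sym2 V) → (f : Sym2 V) ≠ s((y : V), (par y : V)) →
      Reach G.lineGraph (coloring G r par sib lft κ) e f
        (insert (κ x) {k | k = 0 ∨ ∃ w, w ≠ r ∧ H.dist r w ≤ n ∧ κ w = k}) := by
      intro x y e f hx hy he he' hf hf'
      have hxr : x ≠ r := fun h => by have := hroot x h; omega
      obtain ⟨e1, h1, h2, h3, h4⟩ := up x e hxr he he'
      have hd := hR.par_dist x hxr
      have := (ih (par x) y e1 f (by omega) hy h3 h4 hf hf').cons h1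
        (by rw [h2]; exact hnew n x hxr hx)
      rwa [h2] at this
    have hins : ∀ x, x ≠ r → H.dist r x = n + 1 →
      (insert (κ x) {k | k = 0 ∨ ∃ w, w ≠ r ∧ H.dist r w ≤ n ∧ κ w = k}) ⊆
        {k | k = 0 ∨ ∃ w, w ≠ r ∧ H.dist r w ≤ n + 1 ∧ κ w = k} := by
      intro x hxr hx
      refine Set.insert_subset (Or.inr ⟨x, hxr, by omega, rfl⟩) hmono
    intro x y e f hx hy he he' hf hf'
    by_cases hxn : H.dist r x ≤ n
    · by_cases hyn : H.dist r y ≤ n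
      · exact (ih x y e f hxn hyn he he' hf hf').mono hmono
      · have hyr : y ≠ r := fun h => by have := hroot y h; omega
        exact ((one y x f e (by omega) hxn hf hf' he he').mono
          (hins y hyr (by omega))).symm
    · have hxr : x ≠ r := fun h => by have := hroot x h; omega
      by_cases hyn : H.dist r y ≤ n
      · exact (one x y e f (by omega) hyn he he' hf hf').mono (hins x hxr (by omega))
      · have hyr : y ≠ r := fun h => by have := hroot y h; omega
        by_cases hxy : y = x
        · subst hxy
          exact join _ _ e f hx he hf
        by_cases hys : y = sib x
        · subst hys
          let g : G.edgeSet := ⟨s((x : V), (sib x : V)), hHG _ _ (hR.sib_adj x hxr)⟩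
          have hxg : (x : V) ∈ (g : Sym2 V) := by simp [g]
          have hyg : (sib x : V) ∈ (g : Sym2 V) := by simp [g]
          have hgs : (g : Sym2 V) = s((sib x : V), (sib (sib x) : V)) := by
            rw [hR.sib_sib x hxr]; exact Sym2.eq_swap
          by_cases heg : e = g
          · rw [← heg] at hyg
            exact join _ _ e f hy hyg hf
          by_cases hfg : f = g
          · rw [← hfg] at hxg
            exact join _ _ e f hx he hxg
          have hde : Down par sib x e := ⟨he', fun h => heg (Subtype.ext h)⟩
          have hdf : Down par sib (sib x) f :=
            ⟨hf', fun h => hfg (Subtype.ext (h.trans hgs.symm))⟩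
          have hng : ¬ Down par sib x g := fun h => h.2 rfl
          have hng' : ¬ Down par sib (sib x) g := fun h => h.2 hgs
          have a1 : G.lineGraph.Adj e g :=
            SimpleGraph.lineGraph_adj_iff_exists.2 ⟨heg, x, he, hxg⟩
          have a2 : G.lineGraph.Adj g f :=
            SimpleGraph.lineGraph_adj_iff_exists.2 ⟨Ne.symm hfg, sib x, hyg, hf⟩
          have c1 := coloring_eq G r par sib lft κ e g x heg he hxg
          have c2 := coloring_eq G r par sib lft κ g f (sib x) (Ne.symm hfg) hyg hf
          have hl := hlft x hxr
          have hk0 := hκ0 x hxr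
          have hks := hκs x hxr
          have z1 : Zero r par sib lft x e g ↔ lft x := by
            unfold Zero
            have : (g : Sym2 V) = s((x : V), (sib x : V)) := rfl
            tauto
          have z2 : Zero r par sib lft (sib x) g f ↔ lft (sib x) := by
            unfold Zero
            tauto
          have e1 : coloring G r par sib lft κ s(e, g) = 0 ∧
              coloring G r par sib lft κ s(g, f) = κ x ∨
              coloring G r par sib lft κ s(e, g) = κ x ∧
              coloring G r par sib lft κ s(g, f) = 0 := by
            rw [c1, c2]
            unfold col
            rw [hks]
            by_cases hlx : lft x
            · left
              rw [if_pos (z1.2 hlx), if_neg (fun h => hl.1 hlx (z2.1 h))]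
              exact ⟨rfl, rfl⟩
            · right
              rw [if_neg (fun h => hlx (z1.1 h)), if_pos (z2.2 (by tauto))]
              exact ⟨rfl, rfl⟩
          have hS0 : (0 : ℕ) ∈ {k | k = 0 ∨ ∃ w, w ≠ r ∧ H.dist r w ≤ n + 1 ∧ κ w = k} :=
            Or.inl rfl
          have hSx : κ x ∈ {k | k = 0 ∨ ∃ w, w ≠ r ∧ H.dist r w ≤ n + 1 ∧ κ w = k} :=
            Or.inr ⟨x, hxr, hx, rfl⟩
          refine ((Reach.single (S := {coloring G r par sib lft κ s(g, f)}) a2 rfl).cons a1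
            ?_).mono ?_
          · rw [Set.mem_singleton_iff]
            rcases e1 with ⟨h1, h2⟩ | ⟨h1, h2⟩ <;> rw [h1, h2]
            · exact hk0.symm
            · exact hk0
          · rcases e1 with ⟨h1, h2⟩ | ⟨h1, h2⟩ <;> rw [h1, h2]
            · exact Set.insert_subset hS0 (Set.singleton_subset_iff.2 hSx)
            · exact Set.insert_subset hSx (Set.singleton_subset_iff.2 hS0)
        · obtain ⟨e1, h1, h2, h3, h4⟩ := up x e hxr he he'
          have hd := hR.par_dist x hxr
          have hr1 := (one y (par x) f e1 (by omega) (by omega) hf hf' h3 h4).symm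
          have hr2 := hr1.cons h1 (by
            rw [h2]
            intro hmem
            rcases hmem with hmem | hmem
            · rcases hκ x y hxr hyr hmem with h | h
              · exact hxy h
              · exact hys h
            · exact hnew n x hxr (by omega) hmem)
          rw [h2] at hr2
          exact hr2.mono (Set.insert_subset (Or.inr ⟨x, hxr, hx, rfl⟩) (hins y hyr (by omega)))

end TriTree

/-- Let `H` be a triangle-tree-structure (a connected graph each of whose blocks is a
triangle) with exactly `t` triangles, and let the connected graph `G` be obtained from `H`
by attaching pendant edges: `G` consists of `H` (the subgraph induced on the complement of
the set `P` of new vertices) together with the vertices of `P`, each of degree one and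
adjacent to a vertex of `H`. Then `rc (L(G)) ≤ t + 1`. -/
theorem rc_lineGraph_triangleTree_pendant {V : Type*} [Fintype V] [DecidableEq V]
    (G : SimpleGraph V) [DecidableRel G.Adj] (hG : G.Connected) (P : Set V)
    (hpend : ∀ p ∈ P, G.degree p = 1)
    (hattach : ∀ p ∈ P, ∀ q, G.Adj p q → q ∉ P)
    (hHconn : (G.induce Pᶜ).Connected)
    (hHforest : (G.induce Pᶜ).IsTriangleForest)
    (t : ℕ) (ht : {T : Finset ↥Pᶜ | (G.induce Pᶜ).IsTriangle T}.ncard = t) :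
    G.lineGraph.rc ≤ t + 1 := by
  classical
  obtain ⟨r⟩ := hHconn.nonempty
  obtain ⟨par, sib, hR⟩ := TriTree.exists_rooted hHconn hHforest r
  set H := G.induce Pᶜ with hH
  have hHG : ∀ x y : ↥Pᶜ, H.Adj x y → G.Adj x y := fun x y h => h
  let T : ↥Pᶜ → Finset ↥Pᶜ := fun x => {x, sib x, par x}
  have hT : ∀ x, x ≠ r → H.IsTriangle (T x) := by
    intro x hx
    have a1 := hR.sib_adj x hx
    have a2 := hR.par_adj x hx
    have a3 := hR.par_adj _ (hR.sib_root x hx)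
    rw [hR.par_sib x hx] at a3
    refine ⟨?_, ?_⟩
    · exact Finset.card_eq_three.2 ⟨x, sib x, par x, a1.ne, a2.ne, a3.ne, rfl⟩
    · intro u hu v hv huv
      simp only [T, Finset.mem_insert, Finset.mem_singleton] at hu hv
      rcases hu with rfl | rfl | rfl <;> rcases hv with rfl | rfl | rfl <;>
        first
        | exact absurd rfl huv
        | assumption
        | exact SimpleGraph.Adj.symm (by assumption)
  let 𝒯 : Set (Finset ↥Pᶜ) := {T | H.IsTriangle T}
  have hcard : Nat.card 𝒯 = t := ht
  let φ : 𝒯 ≃ Fin t := (Finite.equivFin 𝒯).trans (finCongr hcard)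
  let κ : ↥Pᶜ → ℕ := fun x => if h : x ≠ r then (φ ⟨T x, hT x h⟩ : ℕ) + 1 else 0
  have hκe : ∀ x (h : x ≠ r), κ x = (φ ⟨T x, hT x h⟩ : ℕ) + 1 := fun x h => dif_pos h
  let ψ := Fintype.equivFin ↥Pᶜ
  let lft : ↥Pᶜ → Prop := fun x => ψ x < ψ (sib x)
  have hκ0 : ∀ x, x ≠ r → κ x ≠ 0 := by
    intro x hx
    rw [hκe x hx]; omega
  have hκ : ∀ x y, x ≠ r → y ≠ r → κ x = κ y → y = x ∨ y = sib x := by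
    intro x y hx hy h
    rw [hκe x hx, hκe y hy] at h
    have h1 : φ ⟨T x, hT x hx⟩ = φ ⟨T y, hT y hy⟩ := Fin.ext (by omega)
    have h2 : T x = T y := congrArg Subtype.val (φ.injective h1)
    have hyx : y ∈ T x := by rw [h2]; simp [T]
    have hxy : x ∈ T y := by rw [← h2]; simp [T]
    simp only [T, Finset.mem_insert, Finset.mem_singleton] at hyx hxy
    have d1 := hR.par_dist x hx
    have d2 := hR.par_dist y hy
    have d3 := hR.sib_dist y hy
    rcases hyx with h | h | h
    · exact Or.inl h
    · exact Or.inr h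
    · exfalso
      rw [← h] at d1
      rcases hxy with h' | h' | h' <;> rw [h'] at d1 <;> omega
  have hκs : ∀ x, x ≠ r → κ (sib x) = κ x := by
    intro x hx
    have hs := hR.sib_root x hx
    have h2 : T (sib x) = T x := by
      simp only [T, hR.sib_sib x hx, hR.par_sib x hx]
      exact Finset.insert_comm _ _ _
    rw [hκe _ hx, hκe _ hs]
    congr 4
  have hlft : ∀ x, x ≠ r → (lft x ↔ ¬ lft (sib x)) := by
    intro x hx
    simp only [lft, hR.sib_sib x hx, not_lt]
    have : ψ x ≠ ψ (sib x) := fun h => (hR.sib_adj x hx).ne (ψ.injective h)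
    exact ⟨le_of_lt, fun h => lt_of_le_of_ne h this⟩
  have hκt : ∀ x, κ x < t + 1 := by
    intro x
    by_cases hx : x = r
    · simp [κ, hx]
    · rw [hκe x hx]
      have := (φ ⟨T x, hT x hx⟩).2
      omega
  have hlow : ∀ e : G.edgeSet, ∃ x : ↥Pᶜ, (x : V) ∈ (e : Sym2 V) ∧
      (e : Sym2 V) ≠ s((x : V), (par x : V)) := by
    rintro ⟨e, he⟩
    induction e using Sym2.ind with
    | _ u v =>
    have hadj : G.Adj u v := he
    by_cases hu : u ∈ P
    · have hv := hattach u hu v hadj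
      refine ⟨⟨v, hv⟩, by simp, ?_⟩
      intro h
      rcases Sym2.eq_iff.1 h with ⟨h1, h2⟩ | ⟨h1, h2⟩
      · exact hadj.ne h1
      · exact (par ⟨v, hv⟩).2 (h1 ▸ hu)
    · by_cases hv : v ∈ P
      · refine ⟨⟨u, hu⟩, by simp, ?_⟩
        intro h
        have h1 : v = par ⟨u, hu⟩ := Sym2.congr_right.1 h
        exact (par ⟨u, hu⟩).2 (h1 ▸ hv)
      · by_contra hcon
        push Not at hcon
        have h1 : v = par ⟨u, hu⟩ := Sym2.congr_right.1 (hcon ⟨u, hu⟩ (by simp))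
        have h2 : u = par ⟨v, hv⟩ :=
          Sym2.congr_right.1 (Sym2.eq_swap.trans (hcon ⟨v, hv⟩ (by simp)))
        have h1' : (⟨v, hv⟩ : ↥Pᶜ) = par ⟨u, hu⟩ := Subtype.ext h1
        have h2' : (⟨u, hu⟩ : ↥Pᶜ) = par ⟨v, hv⟩ := Subtype.ext h2
        have hne : (⟨u, hu⟩ : ↥Pᶜ) ≠ ⟨v, hv⟩ := fun h => hadj.ne (congrArg Subtype.val h)
        by_cases hur : (⟨u, hu⟩ : ↥Pᶜ) = r
        · rw [hur, hR.par_root, ← hur] at h1'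
          exact hne h1'.symm
        by_cases hvr : (⟨v, hv⟩ : ↥Pᶜ) = r
        · rw [hvr, hR.par_root, ← hvr] at h2'
          exact hne h2'
        have d1 := hR.par_dist _ hur
        have d2 := hR.par_dist _ hvr
        rw [← h1'] at d1
        rw [← h2'] at d2
        omega
  refine Nat.sInf_le ⟨TriTree.coloring G r par sib lft κ, ?_, ?_⟩
  · intro z _
    unfold TriTree.coloring
    split_ifs with h
    · unfold TriTree.col
      split_ifs
      · omega
      · exact hκt _
    · omega
  · intro e f
    obtain ⟨x, hx1, hx2⟩ := hlow e
    obtain ⟨y, hy1, hy2⟩ := hlow f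
    exact (TriTree.main hHG r par sib hR lft κ hκ0 hκ hκs hlft
      (max (H.dist r x) (H.dist r y)) x y e f (le_max_left _ _) (le_max_right _ _)
      hx1 hx2 hy1 hy2).path
end

section
/- If G is a connected cubic graph (every vertex has degree 3) with n vertices, then the iterated line graph L²(G) = L(L(G)) satisfies rc(L²(G)) ≤ n + 1. -/
open SimpleGraph

namespace RcCubic

open Classical in
/-- The coloring: a common tree edge gives its own color, otherwise one of two extra colors. -/
noncomputable def col {V : Type*} {G : SimpleGraph V} (T : SimpleGraph V)
    (s : Sym2 G.lineGraph.edgeSet) : T.edgeSet ⊕ Bool :=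
  if h : ∃ e : T.edgeSet, ∃ d : G.edgeSet, d.1 = e.1 ∧ ∀ x ∈ s, d ∈ x.1 then Sum.inl h.choose
  else Sum.inr (decide (∃ x ∈ s, (∀ d ∈ x.1, d.1 ∉ T.edgeSet) ∧
    ∀ y ∈ s, (Quot.out x.1).1 ∈ y.1))

variable {V : Type*} {G T : SimpleGraph V}

lemma common_unique {x y : G.lineGraph.edgeSet} (hxy : x ≠ y) {d d' : G.edgeSet}
    (h1 : d ∈ x.1) (h2 : d ∈ y.1) (h3 : d' ∈ x.1) (h4 : d' ∈ y.1) : d = d' := by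
  by_contra hne
  apply hxy
  apply Subtype.ext
  rw [(Sym2.mem_and_mem_iff hne).1 ⟨h1, h3⟩, (Sym2.mem_and_mem_iff hne).1 ⟨h2, h4⟩]

lemma col_tree {x y : G.lineGraph.edgeSet} (hxy : x ≠ y) {d : G.edgeSet}
    (h1 : d ∈ x.1) (h2 : d ∈ y.1) (hd : d.1 ∈ T.edgeSet) :
    col T s(x, y) = Sum.inl ⟨d.1, hd⟩ := by
  have h : ∃ e : T.edgeSet, ∃ d : G.edgeSet, d.1 = e.1 ∧ ∀ z ∈ s(x, y), d ∈ z.1 :=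
    ⟨⟨d.1, hd⟩, d, rfl, by simp [h1, h2]⟩
  unfold col
  rw [dif_pos h]
  obtain ⟨d', hd', hm⟩ := h.choose_spec
  have : d = d' := common_unique hxy h1 h2 (hm x (by simp)) (hm y (by simp))
  congr 1
  apply Subtype.ext
  exact hd'.symm.trans (congrArg Subtype.val this.symm)

lemma col_nontree {x y : G.lineGraph.edgeSet} (hxy : x ≠ y) {d : G.edgeSet}
    (h1 : d ∈ x.1) (h2 : d ∈ y.1) (hx : ∀ d ∈ x.1, d.1 ∉ T.edgeSet)
    {t : G.edgeSet} (ht : t ∈ y.1) (htT : t.1 ∈ T.edgeSet) (b : Bool)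
    (hb : (b = true) ↔ (Quot.out x.1).1 = d) :
    col T s(x, y) = Sum.inr b := by
  classical
  have h : ¬ ∃ e : T.edgeSet, ∃ d : G.edgeSet, d.1 = e.1 ∧ ∀ z ∈ s(x, y), d ∈ z.1 := by
    rintro ⟨e, d', hd', hm⟩
    exact hx d' (hm x (by simp)) (hd' ▸ e.2)
  unfold col
  rw [dif_neg h]
  congr 1
  rw [Bool.eq_iff_iff, hb, decide_eq_true_iff]
  constructor
  · rintro ⟨z, hz, hz1, hz2⟩
    rcases Sym2.mem_iff.1 hz with rfl | rfl
    · exact common_unique hxy (hz2 _ (by simp)) (hz2 _ (by simp)) h1 h2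
    · exact absurd htT (hz1 t ht)
  · intro hq
    exact ⟨x, by simp, hx, by simp [hq, h1, h2]⟩

lemma adj_of_common {x y : G.lineGraph.edgeSet} (hxy : x ≠ y) {d : G.edgeSet}
    (h1 : d ∈ x.1) (h2 : d ∈ y.1) : G.lineGraph.lineGraph.Adj x y := by
  rw [lineGraph_adj_iff_exists]
  exact ⟨hxy, d, h1, h2⟩

/-- Moving along a path of tree edges. -/
lemma walk_along {e f : G.edgeSet} (q : G.lineGraph.Walk e f) (hq : q.IsPath)
    (hT : ∀ d ∈ q.support, d.1 ∈ T.edgeSet) (x y : G.lineGraph.edgeSet)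
    (hx : e ∈ x.1) (hy : f ∈ y.1) :
    ∃ r : G.lineGraph.lineGraph.Walk x y, (r.edges.map (col T)).Nodup ∧
      ∀ k ∈ r.edges.map (col T), ∃ d ∈ q.support, ∃ h : d.1 ∈ T.edgeSet,
        k = Sum.inl ⟨d.1, h⟩ := by
  induction q generalizing x with
  | nil =>
    by_cases hxy : x = y
    · subst hxy
      exact ⟨.nil, by simp, by simp⟩
    · refine ⟨.cons (adj_of_common hxy hx hy) .nil, by simp, ?_⟩
      intro k hk
      simp only [Walk.edges_cons, Walk.edges_nil, List.map_cons, List.map_nil,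
        List.mem_singleton] at hk
      exact ⟨_, by simp, hT _ (by simp), hk.trans (col_tree hxy hx hy _)⟩
  | @cons e g f hadj q ih =>
    rw [Walk.cons_isPath_iff] at hq
    let z : G.lineGraph.edgeSet := ⟨s(e, g), hadj⟩
    obtain ⟨r, hr1, hr2⟩ := ih hq.1 (fun d hd => hT d (by simp [hd])) z (by simp [z]) hy
    have hez : e ∈ z.1 := by simp [z]
    by_cases hxz : x = z
    · subst hxz
      refine ⟨r, hr1, fun k hk => ?_⟩
      obtain ⟨d, hd, h⟩ := hr2 k hk
      exact ⟨d, by simp [hd], h⟩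
    · have hc := col_tree (T := T) hxz hx hez (hT e (by simp))
      refine ⟨.cons (adj_of_common hxz hx hez) r, ?_, ?_⟩
      · rw [Walk.edges_cons, List.map_cons, List.nodup_cons, hc]
        refine ⟨fun hk => ?_, hr1⟩
        obtain ⟨d, hd, h, heq⟩ := hr2 _ hk
        have : e = d := Subtype.ext (by simpa using heq)
        exact hq.2 (this ▸ hd)
      · intro k hk
        rw [Walk.edges_cons, List.map_cons, List.mem_cons] at hk
        rcases hk with rfl | hk
        · exact ⟨e, by simp, _, hc⟩
        · obtain ⟨d, hd, h⟩ := hr2 k hk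
          exact ⟨d, by simp [hd], h⟩

lemma adj_of_vertex {e f : G.edgeSet} (hne : e ≠ f) {v : V} (h1 : v ∈ e.1) (h2 : v ∈ f.1) :
    G.lineGraph.Adj e f := by
  rw [lineGraph_adj_iff_exists]
  exact ⟨hne, v, h1, h2⟩

lemma edge_path (hTG : T ≤ G) {u v : V} (p : T.Walk u v) (hp : p.IsPath) (huv : u ≠ v) :
    ∃ (e f : G.edgeSet) (q : G.lineGraph.Walk e f), q.IsPath ∧
      (∀ d ∈ q.support, d.1 ∈ p.edges) ∧ u ∈ e.1 ∧ v ∈ f.1 ∧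
      (∀ d ∈ q.support, u ∈ d.1 → d = e) ∧ (∀ d ∈ q.support, v ∈ d.1 → d = f) := by
  induction p with
  | nil => exact absurd rfl huv
  | @cons u w v h p ih =>
    rw [Walk.cons_isPath_iff] at hp
    let e : G.edgeSet := ⟨s(u, w), hTG h⟩
    by_cases hwv : w = v
    · subst hwv
      exact ⟨e, e, .nil, by simp, by simp [e], by simp [e], by simp [e], by simp, by simp⟩
    · obtain ⟨e', f, q, hq, hs, he', hf, h1, h2⟩ := ih hp.1 hwv
      have hu : ∀ d ∈ q.support, u ∉ d.1 := by
        intro d hd hud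
        exact hp.2 (p.mem_support_of_mem_edges (hs d hd) hud)
      have hne : e ∉ q.support := fun hh => hu e hh (by simp [e])
      have hne' : e ≠ e' := by
        rintro hh
        exact hne (hh ▸ q.start_mem_support)
      refine ⟨e, f, .cons (adj_of_vertex hne' (v := w) (by simp [e]) he') q, ?_, ?_, by simp [e],
        hf, ?_, ?_⟩
      · rw [Walk.cons_isPath_iff]
        exact ⟨hq, hne⟩
      · intro d hd
        rw [Walk.support_cons, List.mem_cons] at hd
        rcases hd with rfl | hd
        · simp [e]
        · simp [hs d hd]
      · intro d hd hud
        rw [Walk.support_cons, List.mem_cons] at hd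
        rcases hd with rfl | hd
        · rfl
        · exact absurd hud (hu d hd)
      · intro d hd hvd
        rw [Walk.support_cons, List.mem_cons] at hd
        rcases hd with rfl | hd
        · rcases Sym2.mem_iff.1 hvd with hh | hh
          · exact absurd hh.symm huv
          · exact absurd hh.symm hwv
        · exact h2 d hd hvd

lemma edge_path' (hTG : T ≤ G) (hT : T.Connected) {u v : V} (huv : u ≠ v) :
    ∃ (e f : G.edgeSet) (q : G.lineGraph.Walk e f), q.IsPath ∧
      (∀ d ∈ q.support, d.1 ∈ T.edgeSet) ∧ u ∈ e.1 ∧ v ∈ f.1 ∧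
      (∀ d ∈ q.support, u ∈ d.1 → d = e) ∧ (∀ d ∈ q.support, v ∈ d.1 → d = f) ∧
      (∀ d : G.edgeSet, d.1 ∈ T.edgeSet → u ∈ d.1 → v ∈ d.1 → d = e) := by
  by_cases hadj : T.Adj u v
  · let e : G.edgeSet := ⟨s(u, v), hTG hadj⟩
    refine ⟨e, e, .nil, by simp, by simpa [e] using hadj, by simp [e], by simp [e], by simp,
      by simp, ?_⟩
    intro d _ h1 h2
    exact Subtype.ext ((Sym2.mem_and_mem_iff huv).1 ⟨h1, h2⟩)
  · obtain ⟨p, hp⟩ := (hT u v).exists_isPath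
    obtain ⟨e, f, q, hq, hs, he, hf, h1, h2⟩ := edge_path hTG p hp huv
    refine ⟨e, f, q, hq, fun d hd => p.edges_subset_edgeSet (hs d hd), he, hf, h1, h2, ?_⟩
    intro d hd hu hv
    rw [(Sym2.mem_and_mem_iff huv).1 ⟨hu, hv⟩] at hd
    exact absurd hd hadj

/-- The first step: reach a cherry containing a prescribed tree edge `e` at `v`. -/
lemma first_step {v : V} {e : G.edgeSet} (he : e.1 ∈ T.edgeSet) (hve : v ∈ e.1)
    (x : G.lineGraph.edgeSet) (hx : ∀ d ∈ x.1, v ∈ d.1) (b : Bool) :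
    ∃ (z : G.lineGraph.edgeSet) (r : G.lineGraph.lineGraph.Walk x z), e ∈ z.1 ∧
      (r.edges.map (col T)).Nodup ∧ ∀ k ∈ r.edges.map (col T), k = Sum.inr b ∨
        ∃ d : G.edgeSet, v ∈ d.1 ∧ d ≠ e ∧ ∃ h : d.1 ∈ T.edgeSet, k = Sum.inl ⟨d.1, h⟩ := by
  by_cases hex : e ∈ x.1
  · exact ⟨x, .nil, hex, by simp, by simp⟩
  have key : ∀ d ∈ x.1, ∃ z : G.lineGraph.edgeSet, e ∈ z.1 ∧ d ∈ z.1 ∧ x ≠ z := by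
    intro d hd
    have hne : d ≠ e := fun h => hex (h ▸ hd)
    refine ⟨⟨s(d, e), adj_of_vertex hne (hx d hd) hve⟩, by simp, by simp, ?_⟩
    intro h
    apply hex
    rw [h]
    simp
  by_cases ht : ∃ d ∈ x.1, d.1 ∈ T.edgeSet
  · obtain ⟨d, hd, hdT⟩ := ht
    obtain ⟨z, hz, hdz, hxz⟩ := key d hd
    refine ⟨z, .cons (adj_of_common hxz hd hdz) .nil, hz, by simp, ?_⟩
    intro k hk
    simp only [Walk.edges_cons, Walk.edges_nil, List.map_cons, List.map_nil,
      List.mem_singleton] at hk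
    exact .inr ⟨d, hx d hd, fun h => hex (h ▸ hd), hdT, hk.trans (col_tree hxz hd hdz _)⟩
  · push Not at ht
    have hsel : ∃ d ∈ x.1, (b = true ↔ (Quot.out x.1).1 = d) := by
      have hout : s((Quot.out x.1).1, (Quot.out x.1).2) = x.1 := Quot.out_eq x.1
      have hm1 : (Quot.out x.1).1 ∈ x.1 := hout.subst (motive := fun t => _ ∈ t) (by simp)
      have hm2 : (Quot.out x.1).2 ∈ x.1 := hout.subst (motive := fun t => _ ∈ t) (by simp)
      cases b with
      | true => exact ⟨(Quot.out x.1).1, hm1, by simp⟩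
      | false =>
        refine ⟨(Quot.out x.1).2, hm2, ?_⟩
        have h2 : s((Quot.out x.1).1, (Quot.out x.1).2) ∈ G.lineGraph.edgeSet :=
          hout.symm.subst (motive := fun t => t ∈ G.lineGraph.edgeSet) x.2
        have := G.lineGraph.ne_of_adj h2
        simpa using this
    obtain ⟨d, hd, hb⟩ := hsel
    obtain ⟨z, hz, hdz, hxz⟩ := key d hd
    refine ⟨z, .cons (adj_of_common hxz hd hdz) .nil, hz, by simp, ?_⟩
    intro k hk
    simp only [Walk.edges_cons, Walk.edges_nil, List.map_cons, List.map_nil,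
      List.mem_singleton] at hk
    exact .inl (hk.trans (col_nontree hxz hd hdz ht hz he b hb))

lemma center (x : G.lineGraph.edgeSet) : ∃ v, ∀ d ∈ x.1, v ∈ d.1 := by
  obtain ⟨s, hs⟩ := x
  induction s with
  | _ a b =>
    rw [mem_edgeSet, lineGraph_adj_iff_exists] at hs
    obtain ⟨_, v, h1, h2⟩ := hs
    exact ⟨v, by simp [h1, h2]⟩

lemma same_center [Fintype V] [DecidableRel G.Adj] {v : V} (hv : G.degree v = 3)
    (x y : G.lineGraph.edgeSet) (hx : ∀ d ∈ x.1, v ∈ d.1) (hy : ∀ d ∈ y.1, v ∈ d.1) :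
    ∃ d, d ∈ x.1 ∧ d ∈ y.1 := by
  classical
  by_contra hcon
  push Not at hcon
  obtain ⟨s, hs⟩ := x
  obtain ⟨t, ht⟩ := y
  induction s with
  | _ a b =>
  induction t with
  | _ c d =>
    have hab : a ≠ b := G.lineGraph.ne_of_adj hs
    have hcd : c ≠ d := G.lineGraph.ne_of_adj ht
    have h1 := hcon a (by simp)
    have h2 := hcon b (by simp)
    simp only [Sym2.mem_iff, not_or] at h1 h2
    have hsub : ({a.1, b.1, c.1, d.1} : Finset (Sym2 V)) ⊆ G.incidenceFinset v := by
      intro e he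
      rw [mem_incidenceFinset]
      simp only [Finset.mem_insert, Finset.mem_singleton] at he
      rcases he with rfl | rfl | rfl | rfl
      · exact ⟨a.2, hx a (by simp)⟩
      · exact ⟨b.2, hx b (by simp)⟩
      · exact ⟨c.2, hy c (by simp)⟩
      · exact ⟨d.2, hy d (by simp)⟩
    have hcard := Finset.card_le_card hsub
    rw [card_incidenceFinset_eq_degree, hv] at hcard
    have : ({a.1, b.1, c.1, d.1} : Finset (Sym2 V)).card = 4 := by
      rw [Finset.card_insert_of_notMem, Finset.card_insert_of_notMem, Finset.card_pair]
      · simpa [Subtype.ext_iff] using hcd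
      · simpa [Subtype.ext_iff] using h2
      · simp only [Finset.mem_insert, Finset.mem_singleton, ← Subtype.ext_iff, not_or]
        exact ⟨hab, h1⟩
    omega

lemma rainbow_walk [Fintype V] [DecidableRel G.Adj] (hcubic : ∀ v : V, G.degree v = 3)
    (hTG : T ≤ G) (hT : T.Connected) (x y : G.lineGraph.edgeSet) :
    ∃ r : G.lineGraph.lineGraph.Walk x y, (r.edges.map (col T)).Nodup := by
  obtain ⟨u, hu⟩ := center x
  obtain ⟨v, hv⟩ := center y
  by_cases huv : u = v
  · subst huv
    obtain ⟨d, h1, h2⟩ := same_center (hcubic u) x y hu hv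
    by_cases hxy : x = y
    · subst hxy
      exact ⟨.nil, by simp⟩
    · exact ⟨.cons (adj_of_common hxy h1 h2) .nil, by simp⟩
  obtain ⟨e, f, q, hq, hs, he, hf, h1, h2, h3⟩ := edge_path' hTG hT huv
  obtain ⟨x', r1, hx', hn1, hr1⟩ := first_step (hs e q.start_mem_support) he x hu true
  obtain ⟨y', r3, hy', hn3, hr3⟩ := first_step (hs f q.end_mem_support) hf y hv false
  obtain ⟨r2, hn2, hr2⟩ := walk_along q hq hs x' y' hx' hy'
  refine ⟨(r1.append r2).append r3.reverse, ?_⟩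
  simp only [Walk.edges_append, Walk.edges_reverse, List.map_append, List.map_reverse]
  rw [List.nodup_append', List.nodup_append', List.nodup_reverse]
  refine ⟨⟨hn1, hn2, ?_⟩, hn3, ?_⟩
  · intro k hk1 hk2
    obtain ⟨d, hd, hdT, rfl⟩ := hr2 k hk2
    rcases hr1 _ hk1 with h | ⟨d', hd', hne, hT', heq⟩
    · simp at h
    · have : d = d' := Subtype.ext (by simpa using heq)
      subst this
      exact hne (h1 d hd hd')
  · intro k hk hk3
    rw [List.mem_reverse] at hk3
    rw [List.mem_append] at hk
    rcases hk with hk1 | hk2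
    · rcases hr1 _ hk1 with rfl | ⟨d', hd', hne, hT', rfl⟩
      · rcases hr3 _ hk3 with h | ⟨d, hd, hne, hT, heq⟩
        · simp at h
        · simp at heq
      · rcases hr3 _ hk3 with h | ⟨d, hd, hne', hT, heq⟩
        · simp at h
        · have : d' = d := Subtype.ext (by simpa using heq)
          subst this
          exact hne (h3 d' hT hd' hd)
    · obtain ⟨d, hd, hdT, rfl⟩ := hr2 k hk2
      rcases hr3 _ hk3 with h | ⟨d', hd', hne, hT', heq⟩
      · simp at h
      · have : d = d' := Subtype.ext (by simpa using heq)
        subst this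
        exact hne (h2 d hd hd')

end RcCubic

/-- If `G` is a connected cubic graph (every vertex has degree 3) with `n` vertices, then
the iterated line graph satisfies `rc (L²(G)) ≤ n + 1`. -/
theorem rc_iteratedLineGraph_cubic {V : Type*} [Fintype V] (G : SimpleGraph V)
    [DecidableRel G.Adj] (hG : G.Connected) (hcubic : ∀ v : V, G.degree v = 3) :
    G.lineGraph.lineGraph.rc ≤ Fintype.card V + 1 := by
  classical
  obtain ⟨T, hTG, hT⟩ := hG.exists_isTree_le
  have hcard : Fintype.card (T.edgeSet ⊕ Bool) = Fintype.card V + 1 := by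
    have := hT.card_edgeFinset
    rw [Fintype.card_sum, Fintype.card_bool, ← edgeFinset_card]
    omega
  let g := Fintype.equivFinOfCardEq hcard
  apply Nat.sInf_le
  refine ⟨fun s => (g (RcCubic.col T s)).1, fun e _ => (g _).2, fun x y => ?_⟩
  obtain ⟨r, hr⟩ := RcCubic.rainbow_walk hcubic hTG hT.connected x y
  refine ⟨r.bypass, r.bypass_isPath, ?_⟩
  have hinj := List.inj_on_of_nodup_map hr
  refine List.Nodup.map_on ?_ r.bypass_isPath.isTrail.edges_nodup
  intro a ha b hb hab
  exact hinj (r.edges_bypass_subset_edges ha) (r.edges_bypass_subset_edges hb)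
    (g.injective (Fin.ext hab))
end

section
/- Let G be a connected graph with at least two edges and let n₂ be the number of inner vertices of G. Then rc(L(G)) ≤ n₂. (Indeed, the edge coloring of L(G) that, for each inner vertex v of G, assigns one fresh color to all edges of the clique of L(G) induced by the star S(v) of edges incident to v, makes L(G) rainbow connected.) -/
open SimpleGraph

/-- Walk in `G` gives a walk in the line graph whose colors are a sublist of the support. -/
lemma exists_lineGraph_walk {V : Type*} (G : SimpleGraph V)
    (col : Sym2 G.edgeSet → V)
    (hcol : ∀ e f : G.edgeSet, e ≠ f → ∀ v, v ∈ e.1 → v ∈ f.1 → col s(e, f) = v)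
    {u v : V} (p : G.Walk u v) :
    ∀ e f : G.edgeSet, u ∈ e.1 → v ∈ f.1 →
      ∃ q : G.lineGraph.Walk e f, (q.edges.map col).Sublist p.support := by
  induction p with
  | nil =>
    intro e f he hf
    by_cases hef : e = f
    · subst hef
      exact ⟨Walk.nil, by simp⟩
    · have ha : G.lineGraph.Adj e f := lineGraph_adj_iff_exists.2 ⟨hef, _, he, hf⟩
      refine ⟨Walk.cons ha Walk.nil, ?_⟩
      simp [hcol e f hef _ he hf]
  | @cons u w v h p ih =>
    intro e f he hf
    obtain ⟨q, hq⟩ := ih ⟨s(u, w), h⟩ f (by simp) hf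
    by_cases hef : e = ⟨s(u, w), h⟩
    · subst hef
      refine ⟨q, ?_⟩
      rw [Walk.support_cons]
      exact hq.trans (List.sublist_cons_self _ _)
    · have hu : u ∈ (⟨s(u, w), h⟩ : G.edgeSet).1 := by simp
      have ha : G.lineGraph.Adj e ⟨s(u, w), h⟩ :=
        lineGraph_adj_iff_exists.2 ⟨hef, u, he, hu⟩
      refine ⟨Walk.cons ha q, ?_⟩
      rw [Walk.support_cons, Walk.edges_cons, List.map_cons, hcol e _ hef u he hu]
      exact hq.cons_cons u

lemma exists_star_coloring {V : Type*} [Nonempty V] (G : SimpleGraph V) :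
    ∃ col : Sym2 G.edgeSet → V,
      ∀ e f : G.edgeSet, e ≠ f → ∀ v, v ∈ e.1 → v ∈ f.1 → col s(e, f) = v := by
  classical
  have key : ∀ x : Sym2 G.edgeSet, ∃ w : V, ∀ e f : G.edgeSet, x = s(e, f) → e ≠ f →
      ∀ v, v ∈ e.1 → v ∈ f.1 → w = v := by
    intro x
    by_cases hx : ∃ w : V, ∀ e ∈ x, w ∈ e.1
    · obtain ⟨w, hw⟩ := hx
      refine ⟨w, ?_⟩
      rintro e f rfl hef v he hf
      by_contra hne
      exact hef (Subtype.ext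
        (Sym2.eq_of_ne_mem hne (hw e (by simp)) he (hw f (by simp)) hf))
    · refine ⟨Classical.arbitrary V, ?_⟩
      rintro e f rfl hef v he hf
      refine absurd ⟨v, ?_⟩ hx
      intro g hg
      rcases Sym2.mem_iff.1 hg with rfl | rfl <;> assumption
  choose col hc using key
  exact ⟨col, fun e f => hc _ e f rfl⟩

lemma inner_of_two_edges {V : Type*} [Finite V] (G : SimpleGraph V) (e f : G.edgeSet)
    (hef : e ≠ f) (v : V) (he : v ∈ e.1) (hf : v ∈ f.1) :
    2 ≤ Nat.card (G.neighborSet v) := by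
  obtain ⟨e, hE⟩ := e
  obtain ⟨f, hF⟩ := f
  obtain ⟨a, rfl⟩ := Sym2.mem_iff_exists.1 he
  obtain ⟨b, rfl⟩ := Sym2.mem_iff_exists.1 hf
  have hab : a ≠ b := by
    rintro rfl
    exact hef rfl
  have : Nontrivial (G.neighborSet v) :=
    ⟨⟨a, hE⟩, ⟨b, hF⟩, fun h => hab (congrArg Subtype.val h)⟩
  exact Finite.one_lt_card

/-- If `G` is a connected graph with at least two edges and `n₂` inner vertices, then
`rc (L(G)) ≤ n₂`. -/
theorem rc_lineGraph_le_innerCount {V : Type*} [Fintype V] [DecidableEq V]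
    (G : SimpleGraph V) [DecidableRel G.Adj] (hG : G.Connected)
    (h2 : 2 ≤ G.edgeFinset.card) :
    G.lineGraph.rc ≤ innerCount G := by
  classical
  have : Nonempty V := hG.nonempty
  obtain ⟨col, hcol⟩ := exists_star_coloring G
  let S : Set V := {v : V | 2 ≤ Nat.card (G.neighborSet v)}
  have hcard : Nat.card S = innerCount G := rfl
  let φ := Finite.equivFin S
  let idx : V → ℕ := fun v => if h : v ∈ S then (φ ⟨v, h⟩ : ℕ) else 0
  have hlt : ∀ v ∈ S, idx v < innerCount G := by
    intro v hv
    simp only [idx, hv, dif_pos]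
    exact hcard ▸ (φ ⟨v, hv⟩).2
  have hinj : ∀ v ∈ S, ∀ w ∈ S, idx v = idx w → v = w := by
    intro v hv w hw h
    simp only [idx, hv, hw, dif_pos] at h
    exact congrArg Subtype.val (φ.injective (Fin.ext h))
  have hS : ∀ x ∈ G.lineGraph.edgeSet, col x ∈ S := by
    intro x
    induction x with
    | _ e f =>
      intro h
      obtain ⟨hef, v, he, hf⟩ := lineGraph_adj_iff_exists.1 (mem_edgeSet _ |>.1 h)
      rw [hcol e f hef v he hf]
      exact inner_of_two_edges G e f hef v he hf
  apply Nat.sInf_le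
  refine ⟨fun x => idx (col x), fun x hx => hlt _ (hS x hx), ?_⟩
  intro e f
  have hmem : ∀ g : G.edgeSet, ∃ v, v ∈ g.1 := fun g => ⟨_, Sym2.out_fst_mem g.1⟩
  obtain ⟨u, hu⟩ := hmem e
  obtain ⟨v, hv⟩ := hmem f
  obtain ⟨p, hp⟩ := hG.exists_isPath u v
  obtain ⟨q, hq⟩ := exists_lineGraph_walk G col hcol p e f hu hv
  have hnd : (q.edges.map col).Nodup := hq.nodup hp.support_nodup
  refine ⟨q.bypass, q.bypass_isPath, ?_⟩
  refine List.Nodup.map_on ?_ q.bypass_isPath.isTrail.edges_nodup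
  intro x hx y hy hxy
  have hx' := q.edges_bypass_subset hx
  have hy' := q.edges_bypass_subset hy
  exact List.inj_on_of_nodup_map hnd hx' hy'
    (hinj _ (hS _ (q.edges_subset_edgeSet hx')) _ (hS _ (q.edges_subset_edgeSet hy')) hxy)
end
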